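/- arXiv:math/0610780 — 6 statements merged into one kernel-verified Lean document; each statement's English description precedes it below -/
import Mathlib

section
/- For n ≥ 2, the open set B = {x ∈ ℝ^n : x_1 > x_2 > ⋯ > x_n > x_1 − 1} is a connected component of the complement of the union of the hyperplanes of the Shi arrangement S_n. -/
/-!
The base region is the set where every difference `x i - x j` with `i < j` lies in `(0, 1)`, the
largest of them being the one between the first and the last coordinate. It is open and convex,
and on its closure the same differences lie in `[0, 1]`, so every boundary point lies on one of
the hyperplanes. An open connected subset of the complement whose boundary misses the complement
is a connected component.
-/

/-- The complement of the union of the hyperplanes of the Shi arrangement `S_n`: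
the hyperplanes are `x i - x j = c` for `i < j` and `c ∈ {0, 1}`. -/
def shiComp (n : ℕ) : Set (Fin n → ℝ) :=
  {x | ∀ i j : Fin n, i < j → x i - x j ≠ 0 ∧ x i - x j ≠ 1}

/-- A region of the Shi arrangement: a connected component of the complement of
the union of the hyperplanes. -/
def IsShiRegion (n : ℕ) (R : Set (Fin n → ℝ)) : Prop :=
  ∃ x ∈ shiComp n, R = connectedComponentIn (shiComp n) x

theorem connectedComponentIn_eq_of_closure_inter_subset {X : Type*} [TopologicalSpace X]
    {F U : Set X} {x : X} (hU : IsOpen U) (hUconn : IsPreconnected U) (hUF : U ⊆ F)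
    (hclosure : closure U ∩ F ⊆ U) (hx : x ∈ U) : connectedComponentIn F x = U := by
  refine Set.Subset.antisymm ?_ (hUconn.subset_connectedComponentIn hx hUF)
  have hmeet : (connectedComponentIn F x ∩ U).Nonempty :=
    ⟨x, mem_connectedComponentIn (hUF hx), hx⟩
  exact isPreconnected_connectedComponentIn.subset_of_closure_inter_subset hU hmeet
    ((Set.inter_subset_inter_right _ (connectedComponentIn_subset F x)).trans hclosure)

/-- The fundamental alcove of type `A`, on which every positive root `x i - x j` with `i < j` takes
values in `(0, 1)`. It is taken in all of `ι → ℝ`, so it is invariant under adding constants. -/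
def fundamentalAlcove (ι : Type*) [LT ι] : Set (ι → ℝ) :=
  {x | ∀ i j : ι, i < j → x i - x j ∈ Set.Ioo (0 : ℝ) 1}

namespace fundamentalAlcove

theorem eq_setOf_strictAnti {ι : Type*} [PartialOrder ι] {a b : ι} (ha : IsBot a) (hb : IsTop b) :
    fundamentalAlcove ι = {x | StrictAnti x ∧ x a - 1 < x b} := by
  ext x
  constructor
  · intro hx
    refine ⟨fun i j hij => sub_pos.1 (hx i j hij).1, ?_⟩
    rcases (ha b).eq_or_lt with rfl | hab
    · exact sub_one_lt _
    · exact sub_lt_comm.1 (hx a b hab).2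
  · rintro ⟨hx, hab⟩ i j hij
    have hi : x i ≤ x a := hx.antitone (ha i)
    have hj : x b ≤ x j := hx.antitone (hb j)
    exact ⟨sub_pos.2 (hx hij), by linarith⟩

section LT

variable (ι : Type*) [LT ι]

theorem isOpen [Finite ι] : IsOpen (fundamentalAlcove ι) := by
  simp only [fundamentalAlcove, Set.ofPred_forall]
  exact isOpen_iInter_of_finite fun i => isOpen_iInter_of_finite fun j =>
    isOpen_iInter_of_finite fun _ =>
      isOpen_Ioo.preimage ((continuous_apply i).sub (continuous_apply j))

theorem convex : Convex ℝ (fundamentalAlcove ι) := by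
  simp only [fundamentalAlcove, Set.ofPred_forall]
  exact convex_iInter fun i => convex_iInter fun j => convex_iInter fun _ =>
    (convex_Ioo (0 : ℝ) 1).linear_preimage
      (LinearMap.proj (R := ℝ) (φ := fun _ : ι => ℝ) i - LinearMap.proj j)

variable {ι}

theorem sub_mem_Icc_of_mem_closure {x : ι → ℝ} (hx : x ∈ closure (fundamentalAlcove ι)) {i j : ι}
    (hij : i < j) : x i - x j ∈ Set.Icc (0 : ℝ) 1 := by
  have hclosed : IsClosed {y : ι → ℝ | y i - y j ∈ Set.Icc (0 : ℝ) 1} :=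
    isClosed_Icc.preimage ((continuous_apply i).sub (continuous_apply j))
  have hsubset : fundamentalAlcove ι ⊆ {y | y i - y j ∈ Set.Icc (0 : ℝ) 1} :=
    fun _ hy => Set.Ioo_subset_Icc_self (hy i j hij)
  exact closure_minimal hsubset hclosed hx

end LT

section Fin

variable (n : ℕ)

theorem nonempty : (fundamentalAlcove (Fin n)).Nonempty := by
  refine ⟨fun i => -(i / n : ℝ), fun i j hij => ?_⟩
  have hn : (0 : ℝ) < n := Nat.cast_pos.2 i.pos
  have hlt : (i / n : ℝ) < j / n := div_lt_div_of_pos_right (Nat.cast_lt.2 hij) hn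
  have hi : (0 : ℝ) ≤ i / n := by positivity
  have hj : (j / n : ℝ) < 1 := (div_lt_one hn).2 (Nat.cast_lt.2 j.isLt)
  constructor <;> linarith

theorem subset_shiComp : fundamentalAlcove (Fin n) ⊆ shiComp n :=
  fun _ hx i j hij => ⟨(hx i j hij).1.ne', (hx i j hij).2.ne⟩

theorem closure_inter_shiComp_subset :
    closure (fundamentalAlcove (Fin n)) ∩ shiComp n ⊆ fundamentalAlcove (Fin n) := by
  rintro x ⟨hx, hcomp⟩ i j hij
  have hIcc := sub_mem_Icc_of_mem_closure hx hij
  obtain ⟨hne_zero, hne_one⟩ := hcomp i j hij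
  exact ⟨hIcc.1.lt_of_ne' hne_zero, hIcc.2.lt_of_ne hne_one⟩

theorem isShiRegion : IsShiRegion n (fundamentalAlcove (Fin n)) := by
  obtain ⟨x, hx⟩ := nonempty n
  exact ⟨x, subset_shiComp n hx, (connectedComponentIn_eq_of_closure_inter_subset (isOpen _)
    (convex _).isPreconnected (subset_shiComp n) (closure_inter_shiComp_subset n) hx).symm⟩

end Fin

end fundamentalAlcove

/-- The open set `{x : x_1 > x_2 > ⋯ > x_n > x_1 - 1}` is a connected component of
the complement of the union of the hyperplanes of the Shi arrangement. -/
theorem base_region_is_shi_region (n : ℕ) (hn : 2 ≤ n) :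
    IsShiRegion n {x : Fin n → ℝ |
      (∀ i j : Fin n, i < j → x j < x i) ∧
        x ⟨0, by omega⟩ - 1 < x ⟨n - 1, by omega⟩} := by
  have hbot : IsBot (⟨0, by omega⟩ : Fin n) := fun i => Fin.mk_le_of_le_val (Nat.zero_le i)
  have htop : IsTop (⟨n - 1, by omega⟩ : Fin n) := fun i => Fin.le_def.2 (Nat.le_sub_one_of_lt i.2)
  have hregion := fundamentalAlcove.isShiRegion n
  rwa [fundamentalAlcove.eq_setOf_strictAnti hbot htop] at hregion
end

section
/- For n ≥ 2, the number of parking functions a of length n satisfying a_1 = a_2 equals (n+1)^{n−2}. -/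
/-- A parking function of length `n`: a function `a : Fin n → ℕ` such that for
every `k ≤ n`, at least `k` of the entries are `< k`.  (This forces all entries
to lie in `{0, …, n-1}`.) -/
def IsPF (n : ℕ) (a : Fin n → ℕ) : Prop :=
  ∀ k : ℕ, k ≤ n → k ≤ (Finset.univ.filter (fun i => a i < k)).card

/-!
Pollak's circle argument: read the preferences modulo `n + 1`. Of the `n + 1` rotations of a
function `f : Fin n → ZMod (n + 1)`, exactly one is a parking function. Rotation preserves the
condition `f i = f j`, so the `(n + 1) ^ (n - 1)` functions satisfying it are `n + 1` times as many
as the parking functions satisfying it.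

The good rotation is found by putting the integer `#{i | f i = s} - 1` on each spot `s` of the
circle. These integers sum to `-1`, and the rotation of `f` by `c` is a parking function if and only
if all sums of at most `n` consecutive integers starting at `c` are nonnegative. By Raney's cycle
lemma, there is exactly one such `c`.
-/

open Finset

section CycleLemma

variable {m : ℕ} [NeZero m]

lemma sum_range_add_natCast {M : Type*} [AddCommMonoid M] (x : ZMod m → M) (c : ZMod m) :
    ∑ j ∈ range m, x (c + j) = ∑ a, x a := by
  rw [← Equiv.sum_comp (Equiv.addLeft c) x]
  refine sum_bij' (fun j _ => (j : ZMod m)) (fun a _ => a.val) (fun _ _ => mem_univ _)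
    (fun a _ => mem_range.mpr a.val_lt) (fun j hj => ?_) (fun a _ => a.natCast_zmod_val)
    (fun _ _ => rfl)
  exact ZMod.val_natCast_of_lt (mem_range.mp hj)

lemma exists_forall_sum_range_nonneg_of_sum_eq_zero {M : Type*} [AddCommGroup M] [LinearOrder M]
    [IsOrderedAddMonoid M] {x : ZMod m → M} (hx : ∑ a, x a = 0) :
    ∃ c : ZMod m, ∀ k : ℕ, 0 ≤ ∑ j ∈ range k, x (c + j) := by
  let S (t : ℕ) : M := ∑ j ∈ range t, x j
  have S_add (t k : ℕ) : S (t + k) = S t + ∑ j ∈ range k, x (t + j) := by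
    simp only [S, sum_range_add, Nat.cast_add]
  have S_periodic : S.Periodic m := fun t => by
    rw [S_add, sum_range_add_natCast, hx, add_zero]
  obtain ⟨c, -, S_min⟩ := (range m).exists_min_image S ⟨0, mem_range.mpr (NeZero.pos m)⟩
  refine ⟨c, fun k => ?_⟩
  have S_le : S c ≤ S (c + k) := by
    rw [← S_periodic.map_mod_nat (c + k)]
    exact S_min _ (mem_range.mpr (Nat.mod_lt _ (NeZero.pos m)))
  rwa [S_add, le_add_iff_nonneg_right] at S_le

lemma eq_of_forall_sum_range_nonneg {M : Type*} [AddCommMonoid M] [PartialOrder M]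
    [IsOrderedAddMonoid M] {x : ZMod m → M} (hx : ∑ a, x a < 0) {c d : ZMod m}
    (hc : ∀ k < m, 0 ≤ ∑ j ∈ range k, x (c + j)) (hd : ∀ k < m, 0 ≤ ∑ j ∈ range k, x (d + j)) :
    c = d := by
  by_contra hcd
  set k := (d - c).val with hk
  have hkm : k < m := ZMod.val_lt _
  have hk_pos : 0 < k := ZMod.val_pos.mpr (sub_ne_zero.mpr (Ne.symm hcd))
  have hck : c + k = d := by simp [hk]
  -- The arcs from `c` to `d` and from `d` to `c` together make up the whole circle.
  have hsplit : ∑ a, x a = ∑ j ∈ range k, x (c + j) + ∑ j ∈ range (m - k), x (d + j) := by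
    calc ∑ a, x a = ∑ j ∈ range (k + (m - k)), x (c + j) := by
          rw [Nat.add_sub_cancel' hkm.le, sum_range_add_natCast]
      _ = ∑ j ∈ range k, x (c + j) + ∑ j ∈ range (m - k), x (d + j) := by
          simp only [sum_range_add, Nat.cast_add, ← add_assoc, hck]
  exact hx.not_ge (hsplit ▸ add_nonneg (hc k hkm) (hd (m - k) (by lia)))

lemma existsUnique_forall_sum_range_nonneg {x : ZMod m → ℤ} (hx : ∑ a, x a = -1) :
    ∃! c : ZMod m, ∀ k < m, 0 ≤ ∑ j ∈ range k, x (c + j) := by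
  -- Shifting by the average `-1 / m` makes the total zero; it changes the sum of `k < m` terms by
  -- less than `1`, so it does not affect the sign of an integer.
  have hshift : ∑ a, (m * x a + 1) = 0 := by
    simp [sum_add_distrib, ← mul_sum, hx, ZMod.card]
  obtain ⟨c, hc⟩ := exists_forall_sum_range_nonneg_of_sum_eq_zero hshift
  have hc_nonneg (k : ℕ) (hk : k < m) : 0 ≤ ∑ j ∈ range k, x (c + j) := by
    have hsum : 0 ≤ m * ∑ j ∈ range k, x (c + j) + k := by
      simpa [sum_add_distrib, ← mul_sum] using hc k
    by_contra! hneg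
    nlinarith
  exact ⟨c, hc_nonneg, fun d hd => eq_of_forall_sum_range_nonneg (by lia) hd hc_nonneg⟩

end CycleLemma

lemma card_filter_val_sub_lt {α : Type*} [Fintype α] {m : ℕ} [NeZero m] (f : α → ZMod m)
    (c : ZMod m) {k : ℕ} (hk : k ≤ m) :
    #{i | (f i - c).val < k} = ∑ j ∈ range k, #{i | f i = c + j} := by
  rw [card_eq_sum_card_fiberwise (f := fun i => (f i - c).val) (t := range k)
    (fun i hi => by simpa using hi)]
  refine sum_congr rfl fun j hj => congrArg card ?_
  have hjk : j < k := mem_range.mp hj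
  have val_eq_iff (a : ZMod m) : a.val = j ↔ a = j :=
    ⟨fun h => by rw [← h, a.natCast_zmod_val], fun h => by
      rw [h, ZMod.val_natCast_of_lt (hjk.trans_le hk)]⟩
  ext i
  simp only [mem_filter, mem_univ, true_and, ← sub_eq_iff_eq_add', ← val_eq_iff]
  exact ⟨And.right, fun h => ⟨h.trans_lt hjk, h⟩⟩

lemma isPF_val_sub_iff {n : ℕ} (f : Fin n → ZMod (n + 1)) (c : ZMod (n + 1)) :
    IsPF n (fun i => (f i - c).val) ↔
      ∀ k < n + 1, 0 ≤ ∑ j ∈ range k, ((#{i | f i = c + j} : ℤ) - 1) := by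
  simp only [Nat.lt_succ_iff, IsPF]
  refine forall₂_congr fun k hk => ?_
  rw [card_filter_val_sub_lt f c (hk.trans n.le_succ), ← Nat.cast_le (α := ℤ)]
  simp

lemma existsUnique_isPF_val_sub {n : ℕ} (f : Fin n → ZMod (n + 1)) :
    ∃! c : ZMod (n + 1), IsPF n (fun i => (f i - c).val) := by
  simp only [isPF_val_sub_iff]
  refine existsUnique_forall_sum_range_nonneg (x := fun s => (#{i | f i = s} : ℤ) - 1) ?_
  have hcars : ∑ s, #{i | f i = s} = n := by
    simpa using (card_eq_sum_card_fiberwise (f := f) (s := univ) (t := univ) (by simp)).symm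
  simp [sum_sub_distrib, ← Nat.cast_sum, hcars, ZMod.card]

lemma card_mul_ncard_inter_of_existsUnique_vadd {G X : Type*} [AddGroup G] [AddAction G X]
    {A B : Set X} (hA : ∀ x ∈ B, ∃! g : G, -g +ᵥ x ∈ A) (hB : ∀ (g : G), ∀ x ∈ B, g +ᵥ x ∈ B) :
    Nat.card G * (A ∩ B).ncard = B.ncard := by
  rw [← Set.ncard_univ, ← Set.ncard_prod]
  refine Set.BijOn.ncard_eq (f := fun p : G × X => p.1 +ᵥ p.2) ⟨?_, ?_, ?_⟩
  · exact fun p hp => hB p.1 p.2 hp.2.2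
  · rintro ⟨g, x⟩ ⟨-, hxA, hxB⟩ ⟨h, y⟩ ⟨-, hyA, -⟩ (hgh : g +ᵥ x = h +ᵥ y)
    obtain rfl : g = h := (hA _ (hB g x hxB)).unique (by simpa using hxA)
      (by simpa [hgh] using hyA)
    simpa using hgh
  · intro x hx
    obtain ⟨g, hg, -⟩ := hA x hx
    exact ⟨(g, -g +ᵥ x), ⟨Set.mem_univ g, hg, hB _ x hx⟩, vadd_neg_vadd g x⟩

lemma succ_mul_ncard_isPF_inter {n : ℕ} {B : Set (Fin n → ZMod (n + 1))}
    (hB : ∀ c : ZMod (n + 1), ∀ f ∈ B, c +ᵥ f ∈ B) :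
    (n + 1) * ({f | IsPF n (fun i => (f i).val)} ∩ B).ncard = B.ncard := by
  have h := card_mul_ncard_inter_of_existsUnique_vadd (G := ZMod (n + 1))
    (A := {f | IsPF n (fun i => (f i).val)}) (B := B) (fun f _ => ?_) hB
  · rwa [Nat.card_zmod] at h
  · simpa [neg_add_eq_sub] using existsUnique_isPF_val_sub f

lemma IsPF.lt {n : ℕ} {a : Fin n → ℕ} (ha : IsPF n a) (i : Fin n) : a i < n := by
  have hcard : #{i | a i < n} = #(univ : Finset (Fin n)) :=
    (card_le_univ _).antisymm (by simpa using ha n le_rfl)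
  exact card_filter_eq_iff.mp hcard i (mem_univ i)

lemma ncard_preimage_val {α : Type*} {m : ℕ} [NeZero m] {A : Set (α → ℕ)}
    (hA : ∀ a ∈ A, ∀ i, a i < m) :
    ((fun (f : α → ZMod m) i => (f i).val) ⁻¹' A).ncard = A.ncard :=
  Set.ncard_preimage_of_injective_subset_range (ZMod.val_injective m).comp_left fun a ha =>
    ⟨fun i => (a i : ZMod m), funext fun i => ZMod.val_natCast_of_lt (hA a ha i)⟩

lemma ncard_setOf_apply_eq_apply {α β : Type*} [Finite α] {i j : α} (hij : i ≠ j) :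
    {f : α → β | f i = f j}.ncard = Nat.card β ^ (Nat.card α - 1) := by
  classical
  have hcard : Nat.card {k // k ≠ i} = Nat.card α - 1 := by
    have := Fintype.ofFinite α
    simp
  rw [← hcard, ← Nat.card_fun, ← Set.ncard_univ]
  refine Set.BijOn.ncard_eq (f := fun f k => f k.1) ⟨Set.mapsTo_univ _ _, ?_, ?_⟩
  · intro f (hf : f i = f j) g (hg : g i = g j) hfg
    have hne (k : α) (hk : k ≠ i) : f k = g k := congrFun hfg ⟨k, hk⟩
    funext k
    obtain rfl | hk := eq_or_ne k i
    · rw [hf, hg, hne j hij.symm]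
    · exact hne k hk
  · intro g _
    refine ⟨fun k => if hk : k = i then g ⟨j, hij.symm⟩ else g ⟨k, hk⟩, ?_, ?_⟩
    · simp [hij.symm]
    · funext k
      simp [k.2]

theorem eq_parking_count_general {n : ℕ} {i j : Fin n} (hij : i ≠ j) :
    {a : Fin n → ℕ | IsPF n a ∧ a i = a j}.ncard = (n + 1) ^ (n - 2) := by
  have hn : n - 1 = n - 2 + 1 := by lia
  have hresidues := ncard_preimage_val (m := n + 1) (A := {a | IsPF n a ∧ a i = a j})
    fun a ha k => (ha.1.lt k).trans n.lt_succ_self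
  have hrotations := succ_mul_ncard_isPF_inter (B := {f : Fin n → ZMod (n + 1) | f i = f j})
    fun c f hf => congrArg (c + ·) hf
  rw [ncard_setOf_apply_eq_apply hij, Nat.card_zmod, Nat.card_fin, hn, pow_succ'] at hrotations
  rw [← hresidues, ← Nat.eq_of_mul_eq_mul_left n.succ_pos hrotations]
  congr 1
  ext f
  simp [(ZMod.val_injective (n + 1)).eq_iff]

/-- The number of parking functions of length `n` with `a_1 = a_2` is `(n+1)^(n-2)`. -/
theorem eq_parking_count (n : ℕ) (hn : 2 ≤ n) :
    Set.ncard {a : Fin n → ℕ | IsPF n a ∧ a ⟨0, by omega⟩ = a ⟨1, by omega⟩} =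
      (n + 1) ^ (n - 2) :=
  eq_parking_count_general (by simp)
end

section
/- For n ≥ 2, the number of regions R of the Shi arrangement S_n such that x_1 − x_2 < 0 for all x ∈ R is greater than or equal to the number of regions R such that x_1 − x_2 > 1 for all x ∈ R. -/
/-!
For `i < j`, the exchange of two adjacent coordinates `a`, `b` permutes the hyperplanes
`x i - x j = c` with `(i, j) ≠ (a, b)`. It sends a point of the complement with `1 < x a - x b` to
one with `x a - x b < -1`, which again lies off the arrangement, so it carries the regions on which
`1 < x a - x b` into regions on which `x a - x b < 0`. Two points lie in the same region exactly
when they are on the same side of every hyperplane, since the set of points on given sides is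
convex. If the images of two points with `1 < x a - x b` are on the same sides, then so are the
points themselves: both are beyond the hyperplanes of the pair `(a, b)`, and the other hyperplanes
are permuted. Hence the exchange induces an injection on regions.
-/

open Set SignType

section ConnectedComponents

variable {X Y : Type*} [TopologicalSpace X] [TopologicalSpace Y]

lemma sign_eq_of_isPreconnected {α : Type*} [Zero α] [LinearOrder α] [TopologicalSpace α]
    [OrderTopology α] {S : Set X} {g : X → α} (hS : IsPreconnected S) (hg : ContinuousOn g S)
    (hg₀ : ∀ x ∈ S, g x ≠ 0) {x y : X} (hx : x ∈ S) (hy : y ∈ S) : sign (g x) = sign (g y) :=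
  hS.constant (f := fun z => sign (g z))
    (fun z hz => (continuousAt_sign_of_ne_zero (hg₀ z hz)).comp_continuousWithinAt (hg z hz)) hx hy

/-- The set of connected components of a subset `F` of a topological space. For the complement of a
hyperplane arrangement these are the regions. -/
def componentsIn (F : Set X) : Set (Set X) :=
  connectedComponentIn F '' F

lemma ncard_componentsIn_le {F P : Set X} {G Q : Set Y} (hG : (componentsIn G).Finite)
    {σ : X → Y} (hσ : MapsTo σ (F ∩ P) G)
    (hσQ : ∀ x ∈ F ∩ P, connectedComponentIn G (σ x) ⊆ Q)
    (hinj : ∀ x ∈ F ∩ P, ∀ y ∈ F ∩ P,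
      σ y ∈ connectedComponentIn G (σ x) → y ∈ connectedComponentIn F x) :
    {C ∈ componentsIn F | C ⊆ P}.ncard ≤ {C ∈ componentsIn G | C ⊆ Q}.ncard := by
  obtain ⟨T, hTS, hT⟩ := exists_subset_bijOn {x ∈ F | connectedComponentIn F x ⊆ P}
    (connectedComponentIn F)
  have himage : {C ∈ componentsIn F | C ⊆ P} = connectedComponentIn F '' T := by
    rw [hT.image_eq]
    ext C
    constructor
    · rintro ⟨⟨x, hx, rfl⟩, hP⟩
      exact ⟨x, ⟨hx, hP⟩, rfl⟩
    · rintro ⟨x, ⟨hx, hP⟩, rfl⟩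
      exact ⟨⟨x, hx, rfl⟩, hP⟩
  have hTFP : T ⊆ F ∩ P := fun x hx =>
    ⟨(hTS hx).1, (hTS hx).2 (mem_connectedComponentIn (hTS hx).1)⟩
  rw [himage, hT.injOn.ncard_image]
  refine ncard_le_ncard_of_injOn (fun x => connectedComponentIn G (σ x))
    (fun x hx => ⟨mem_image_of_mem _ (hσ (hTFP hx)), hσQ x (hTFP hx)⟩)
    (fun x hx y hy hxy => hT.injOn hx hy ?_) (hG.subset (sep_subset _ _))
  have hσy : σ y ∈ connectedComponentIn G (σ x) :=
    hxy.ge (mem_connectedComponentIn (hσ (hTFP hy)))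
  exact connectedComponentIn_eq (hinj x (hTFP hx) y (hTFP hy) hσy)

end ConnectedComponents

section Arrangement

variable {E ι : Type*} [AddCommGroup E] [Module ℝ E] [TopologicalSpace E]

/-- The complement of the arrangement of the hyperplanes `f i = 0`, given by their affine
equations. -/
def arrangementCompl (f : ι → E →ᴬ[ℝ] ℝ) : Set E :=
  {x | ∀ i, f i x ≠ 0}

/-- The sign vector of a point with respect to the arrangement of the hyperplanes `f i = 0`: it
records on which side of each hyperplane the point lies. -/
noncomputable def signVector (f : ι → E →ᴬ[ℝ] ℝ) (x : E) : ι → SignType :=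
  fun i => sign (f i x)

lemma convex_setOf_signVector_eq (f : ι → E →ᴬ[ℝ] ℝ) (s : ι → SignType) :
    Convex ℝ {x | signVector f x = s} := by
  have hside (i : ι) : Convex ℝ {x | sign (f i x) = s i} :=
    (ordConnected_singleton.preimage_mono sign.monotone).convex.affine_preimage
      (f i : E →ᵃ[ℝ] ℝ)
  simpa only [signVector, funext_iff, ofPred_forall] using convex_iInter hside

variable [IsTopologicalAddGroup E] [ContinuousSMul ℝ E] {f : ι → E →ᴬ[ℝ] ℝ}

lemma connectedComponentIn_arrangementCompl {x : E} (hx : x ∈ arrangementCompl f) :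
    connectedComponentIn (arrangementCompl f) x = {y | signVector f y = signVector f x} := by
  apply Subset.antisymm
  · have havoid (i : ι) : ∀ z ∈ connectedComponentIn (arrangementCompl f) x, f i z ≠ 0 :=
      fun z hz => connectedComponentIn_subset _ _ hz i
    exact fun y hy => funext fun i => sign_eq_of_isPreconnected isPreconnected_connectedComponentIn
      (f i).continuous.continuousOn (havoid i) hy (mem_connectedComponentIn hx)
  · refine (convex_setOf_signVector_eq f _).isPreconnected.subset_connectedComponentIn rfl
      fun y hy i => ?_
    have hsign : sign (f i y) = sign (f i x) := congrFun hy i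
    exact sign_ne_zero.1 (hsign ▸ sign_ne_zero.2 (hx i))

lemma finite_componentsIn_arrangementCompl [Finite ι] :
    (componentsIn (arrangementCompl f)).Finite := by
  refine (finite_range fun s => {y | signVector f y = s}).subset ?_
  rintro _ ⟨x, hx, rfl⟩
  exact ⟨signVector f x, (connectedComponentIn_arrangementCompl hx).symm⟩

end Arrangement

lemma swap_lt_swap_of_covBy {α : Type*} [LinearOrder α] {a b i j : α} (hab : a ⋖ b) (hij : i < j)
    (hne : ¬(i = a ∧ j = b)) : Equiv.swap a b i < Equiv.swap a b j := by
  have hlt : a < b := hab.lt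
  have hi : i < b → i ≤ a := hab.le_of_lt
  have hj : a < j → b ≤ j := hab.ge_of_gt
  simp only [Equiv.swap_apply_def]
  grind

section Shi

variable {n : ℕ} {a b : Fin n} {x y : Fin n → ℝ}

/-- The affine equations `x i - x j - c = 0`, for `i < j` and `c ∈ {0, 1}`, of the hyperplanes of
the Shi arrangement. -/
noncomputable def shiForm (n : ℕ) :
    {p : Fin n × Fin n // p.1 < p.2} × Fin 2 → (Fin n → ℝ) →ᴬ[ℝ] ℝ :=
  fun ⟨⟨(i, j), _⟩, c⟩ =>
    let coord := ContinuousLinearMap.proj (R := ℝ) (φ := fun _ : Fin n => ℝ)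
    (coord i - coord j).toContinuousAffineMap - ContinuousAffineMap.const ℝ (Fin n → ℝ) (c : ℝ)

lemma shiComp_eq_arrangementCompl (n : ℕ) : shiComp n = arrangementCompl (shiForm n) := by
  ext x
  simp [shiComp, arrangementCompl, shiForm, Fin.forall_fin_two, sub_ne_zero]

lemma isShiRegion_iff {R : Set (Fin n → ℝ)} : IsShiRegion n R ↔ R ∈ componentsIn (shiComp n) := by
  simp only [IsShiRegion, componentsIn, mem_image, eq_comm]

lemma mem_connectedComponentIn_shiComp_iff (hx : x ∈ shiComp n) :
    y ∈ connectedComponentIn (shiComp n) x ↔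
      ∀ i j, i < j → ∀ c : Fin 2, sign (y i - y j - c) = sign (x i - x j - c) := by
  rw [shiComp_eq_arrangementCompl] at hx ⊢
  rw [connectedComponentIn_arrangementCompl hx]
  simp [signVector, funext_iff, shiForm]

lemma comp_swap_mem_shiComp (hab : a ⋖ b) (hx : x ∈ shiComp n) (hlt : 1 < x a - x b) :
    x ∘ Equiv.swap a b ∈ shiComp n := by
  intro i j hij
  by_cases hp : i = a ∧ j = b
  · obtain ⟨rfl, rfl⟩ := hp
    simp only [Function.comp_apply, Equiv.swap_apply_left, Equiv.swap_apply_right]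
    constructor <;> linarith
  · exact hx _ _ (swap_lt_swap_of_covBy hab hij hp)

lemma sub_neg_of_mem_connectedComponentIn_shiComp (hab : a < b) (hx : x ∈ shiComp n)
    (hneg : x a - x b < 0) (hy : y ∈ connectedComponentIn (shiComp n) x) : y a - y b < 0 := by
  have hsign := (mem_connectedComponentIn_shiComp_iff hx).1 hy a b hab 0
  simpa only [Fin.val_zero, Nat.cast_zero, sub_zero, sign_neg hneg, sign_eq_neg_one_iff]
    using hsign

lemma mem_connectedComponentIn_shiComp_of_comp_swap (hab : a ⋖ b) (hx : x ∈ shiComp n)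
    (hxlt : 1 < x a - x b) (hylt : 1 < y a - y b)
    (h : y ∘ Equiv.swap a b ∈ connectedComponentIn (shiComp n) (x ∘ Equiv.swap a b)) :
    y ∈ connectedComponentIn (shiComp n) x := by
  have hswap := (mem_connectedComponentIn_shiComp_iff (comp_swap_mem_shiComp hab hx hxlt)).1 h
  refine (mem_connectedComponentIn_shiComp_iff hx).2 fun i j hij c => ?_
  by_cases hp : i = a ∧ j = b
  · obtain ⟨rfl, rfl⟩ := hp
    have hc : (c : ℝ) ≤ 1 := by exact_mod_cast Nat.le_of_lt_succ c.isLt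
    rw [sign_pos (by linarith), sign_pos (by linarith)]
  · simpa only [Function.comp_apply, Equiv.swap_apply_self] using
      hswap _ _ (swap_lt_swap_of_covBy hab hij hp) c

end Shi

theorem shi_regions_lt_ge_gt_general {n : ℕ} {a b : Fin n} (hab : a ⋖ b) :
    Set.ncard {R : Set (Fin n → ℝ) | IsShiRegion n R ∧ ∀ x ∈ R, 1 < x a - x b} ≤
      Set.ncard {R : Set (Fin n → ℝ) | IsShiRegion n R ∧ ∀ x ∈ R, x a - x b < 0} := by
  simp only [isShiRegion_iff]
  have hfinite : (componentsIn (shiComp n)).Finite :=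
    shiComp_eq_arrangementCompl n ▸ finite_componentsIn_arrangementCompl
  refine ncard_componentsIn_le (P := {x | 1 < x a - x b}) (Q := {x | x a - x b < 0})
    (σ := (· ∘ Equiv.swap a b)) hfinite ?mapsTo ?subset ?injective
  case mapsTo => exact fun x ⟨hx, hlt⟩ => comp_swap_mem_shiComp hab hx hlt
  case subset =>
    rintro x ⟨hx, hlt : 1 < x a - x b⟩ y hy
    have hneg : (x ∘ Equiv.swap a b) a - (x ∘ Equiv.swap a b) b < 0 := by
      simp only [Function.comp_apply, Equiv.swap_apply_left, Equiv.swap_apply_right]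
      linarith
    exact sub_neg_of_mem_connectedComponentIn_shiComp hab.lt (comp_swap_mem_shiComp hab hx hlt)
      hneg hy
  case injective =>
    exact fun x ⟨hx, hxlt⟩ y ⟨_, hylt⟩ =>
      mem_connectedComponentIn_shiComp_of_comp_swap hab hx hxlt hylt

/-- The number of Shi regions with `x_1 - x_2 < 0` is at least the number with
`x_1 - x_2 > 1`. -/
theorem shi_regions_lt_ge_gt (n : ℕ) (hn : 2 ≤ n) :
    Set.ncard {R : Set (Fin n → ℝ) | IsShiRegion n R ∧
        ∀ x ∈ R, 1 < x ⟨0, by omega⟩ - x ⟨1, by omega⟩} ≤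
      Set.ncard {R : Set (Fin n → ℝ) | IsShiRegion n R ∧
        ∀ x ∈ R, x ⟨0, by omega⟩ - x ⟨1, by omega⟩ < 0} :=
  shi_regions_lt_ge_gt_general (Fin.covBy_iff.2 (Nat.covBy_iff_add_one_eq.2 rfl))
end

section
/- For n ≥ 2 and fixed distinct vertices v1, v2 ∈ {1,…,n}, the number of trees on the vertex set {0,1,…,n} in which neither v1 lies on the unique path from v2 to 0 nor v2 lies on the unique path from v1 to 0 is greater than or equal to the number of trees in which v1 lies on the unique path from v2 to 0. -/
/-- `v` lies on the unique `u`–`w` path in `G`: there is a path from `u` to `w`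
whose support contains `v`.  (In a tree the `u`–`w` path is unique.) -/
def LiesOnPath {V : Type*} (G : SimpleGraph V) (v u w : V) : Prop :=
  ∃ p : G.Walk u w, p.IsPath ∧ v ∈ p.support

/-!
Transposing the labels `r` and `v₁` exchanges the trees with `v₁` on the `v₂`–`r` path and the
trees with `r` on the `v₂`–`v₁` path, so these are equally numerous. In a tree of the second
kind, the path is cut at `r` into the `v₂`–`r` path, which misses `v₁`, and the `r`–`v₁` path,
which misses `v₂`.
-/

variable {V W : Type*}

namespace LiesOnPath

variable {G : SimpleGraph V} {u v w : V}

theorem symm (h : LiesOnPath G v u w) : LiesOnPath G v w u := by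
  obtain ⟨p, hp, hv⟩ := h
  exact ⟨p.reverse, hp.reverse, by simpa only [p.support_reverse, List.mem_reverse] using hv⟩

theorem map {H : SimpleGraph W} {f : G →g H} (hf : Function.Injective f)
    (h : LiesOnPath G v u w) : LiesOnPath H (f v) (f u) (f w) := by
  obtain ⟨p, hp, hv⟩ := h
  exact ⟨p.map f, hp.map hf, p.support_map f ▸ List.mem_map_of_mem hv⟩

theorem not_liesOnPath_right (hG : G.IsAcyclic) (hvw : v ≠ w) (h : LiesOnPath G v u w) :
    ¬LiesOnPath G w u v := by
  classical
  obtain ⟨p, hp, hv⟩ := h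
  rintro ⟨q, hq, hw⟩
  have hqp : q = p.takeUntil v hv :=
    congrArg Subtype.val ((hG.subsingleton_path u v).elim ⟨q, hq⟩ ⟨_, hp.takeUntil hv⟩)
  exact p.endpoint_notMem_support_takeUntil hp hv hvw.symm (hqp ▸ hw)

theorem not_liesOnPath_left (hG : G.IsAcyclic) (hvu : v ≠ u) (h : LiesOnPath G v u w) :
    ¬LiesOnPath G u w v :=
  h.symm.not_liesOnPath_right hG hvu

end LiesOnPath

theorem liesOnPath_iff_of_iso {G : SimpleGraph V} {H : SimpleGraph W} (e : G ≃g H) {u v w : V} :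
    LiesOnPath H (e v) (e u) (e w) ↔ LiesOnPath G v u w :=
  ⟨fun h ↦ by simpa using h.map (f := e.symm.toHom) e.symm.injective,
    fun h ↦ h.map (f := e.toHom) e.injective⟩

theorem encard_isTree_liesOnPath_map_equiv (e : V ≃ W) (v u w : V) :
    {T : SimpleGraph W | T.IsTree ∧ LiesOnPath T (e v) (e u) (e w)}.encard =
      {T : SimpleGraph V | T.IsTree ∧ LiesOnPath T v u w}.encard := by
  rw [← Set.encard_preimage_of_bijective e.symm.simpleGraph.bijective]
  congr 1
  ext T
  let iso : e.symm.simpleGraph T ≃g T := .comap e T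
  exact and_congr iso.isTree_iff.symm (liesOnPath_iff_of_iso iso)

theorem tree_count_disj_ge_v1_general (r v₁ v₂ : V) (h₁₂ : v₁ ≠ v₂) (h₁ : v₁ ≠ r) (h₂ : v₂ ≠ r) :
    {T : SimpleGraph V | T.IsTree ∧ LiesOnPath T v₁ v₂ r}.encard ≤
      {T : SimpleGraph V | T.IsTree ∧
        ¬LiesOnPath T v₁ v₂ r ∧ ¬LiesOnPath T v₂ v₁ r}.encard := by
  classical
  calc {T : SimpleGraph V | T.IsTree ∧ LiesOnPath T v₁ v₂ r}.encard
    _ = {T : SimpleGraph V | T.IsTree ∧ LiesOnPath T r v₂ v₁}.encard := by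
      simpa [Equiv.swap_apply_of_ne_of_ne h₂ h₁₂.symm] using
        encard_isTree_liesOnPath_map_equiv (Equiv.swap r v₁) r v₂ v₁
    _ ≤ {T : SimpleGraph V | T.IsTree ∧
          ¬LiesOnPath T v₁ v₂ r ∧ ¬LiesOnPath T v₂ v₁ r}.encard :=
      Set.encard_le_encard fun T ⟨hT, hr⟩ ↦
        ⟨hT, hr.not_liesOnPath_right hT.isAcyclic h₁.symm,
          hr.not_liesOnPath_left hT.isAcyclic h₂.symm⟩

/-- The number of trees on `{0, 1, …, n}` in which neither `v1` lies on the
`v2`–`0` path nor `v2` lies on the `v1`–`0` path is at least the number of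
trees in which `v1` lies on the `v2`–`0` path. -/
theorem tree_count_disj_ge_v1 (n : ℕ) (hn : 2 ≤ n) (v1 v2 : Fin (n + 1))
    (h12 : v1 ≠ v2) (h1 : v1 ≠ 0) (h2 : v2 ≠ 0) :
    Set.ncard {T : SimpleGraph (Fin (n + 1)) | T.IsTree ∧ LiesOnPath T v1 v2 0} ≤
      Set.ncard {T : SimpleGraph (Fin (n + 1)) | T.IsTree ∧
        ¬LiesOnPath T v1 v2 0 ∧ ¬LiesOnPath T v2 v1 0} :=
  ENat.toNat_le_toNat (tree_count_disj_ge_v1_general 0 v1 v2 h12 h1 h2)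
    (Set.toFinite _).encard_lt_top.ne
end

section
/- Let n ≥ 2 and let a = (a_1, a_2, a_3, …, a_n) be a parking function of length n with a_1 = a_2. Then the tuple (a_1, a_2 + 1, a_3, …, a_n), obtained from a by increasing the second entry by one, is again a parking function of length n (in particular a_2 + 1 ≤ n − 1). -/
/-!
Raising one entry from `c` to `c + 1` only affects the number of entries `< c + 1`, which drops by
one, so it suffices that a parking function in which `c` occurs twice has at least `c + 2` entries
`< c + 1`. Indeed at least `c` of its entries are `< c`, and two more are equal to `c`.
-/

section FilterCard

variable {ι β : Type*}

theorem filter_update_of_iff [DecidableEq ι] {p : β → Prop} [DecidablePred p] {f : ι → β} {j : ι}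
    {b : β} (s : Finset ι) (hb : p b ↔ p (f j)) :
    s.filter (fun i => p (Function.update f j b i)) = s.filter (fun i => p (f i)) := by
  refine Finset.filter_congr fun i _ => ?_
  obtain rfl | hij := eq_or_ne i j
  · rwa [Function.update_self]
  · rw [Function.update_of_ne hij]

theorem filter_update_of_not [DecidableEq ι] {p : β → Prop} [DecidablePred p] {b : β}
    (s : Finset ι) (f : ι → β) (j : ι) (hb : ¬p b) :
    s.filter (fun i => p (Function.update f j b i)) = (s.filter (fun i => p (f i))).erase j := by
  ext i
  obtain rfl | hij := eq_or_ne i j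
  · simp [hb]
  · simp [hij]

theorem card_filter_le_eq_card_filter_lt_add_card_filter_eq [PartialOrder β] [DecidableEq β]
    [DecidableLE β] [DecidableLT β] (s : Finset ι) (f : ι → β) (c : β) :
    (s.filter (fun i => f i ≤ c)).card =
      (s.filter (fun i => f i < c)).card + (s.filter (fun i => f i = c)).card := by
  classical
  rw [← Finset.card_union_of_disjoint (Finset.disjoint_filter.2 fun _ _ hlt => hlt.ne),
    ← Finset.filter_or]
  simp only [le_iff_lt_or_eq]

end FilterCard

namespace IsPF

variable {n : ℕ} {a : Fin n → ℕ} {i j : Fin n}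

theorem lt_s13 (h : IsPF n a) (i : Fin n) : a i < n := by
  have hcard : (Finset.univ.filter (fun i => a i < n)).card = (Finset.univ : Finset (Fin n)).card :=
    le_antisymm (Finset.card_filter_le _ _) (by simpa using h n le_rfl)
  exact Finset.card_filter_eq_iff.1 hcard i (Finset.mem_univ i)

theorem add_two_le_card_of_ne (h : IsPF n a) (hij : i ≠ j) (heq : a i = a j) :
    a j + 2 ≤ (Finset.univ.filter (fun l => a l ≤ a j)).card := by
  have hlt : a j ≤ (Finset.univ.filter (fun l => a l < a j)).card := h (a j) (h.lt_s13 j).le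
  have htwo : 2 ≤ (Finset.univ.filter (fun l => a l = a j)).card :=
    Finset.one_lt_card.2 ⟨i, by simpa using heq, j, by simp, hij⟩
  rw [card_filter_le_eq_card_filter_lt_add_card_filter_eq]
  exact add_le_add hlt htwo

theorem update_add_one (h : IsPF n a)
    (hcard : a j + 2 ≤ (Finset.univ.filter (fun l => a l ≤ a j)).card) :
    IsPF n (Function.update a j (a j + 1)) := by
  intro k hk
  obtain rfl | hkj := eq_or_ne k (a j + 1)
  · rw [filter_update_of_not (p := (· < a j + 1)) _ _ _ (lt_irrefl _)]
    simp only [Order.lt_add_one_iff]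
    exact (Nat.le_sub_one_of_lt hcard).trans Finset.pred_card_le_card_erase
  · rw [filter_update_of_iff (p := (· < k)) _ (by omega)]
    exact h k hk

end IsPF

theorem parking_function_bump_second_general {n : ℕ} {a : Fin n → ℕ} (h : IsPF n a) {i j : Fin n}
    (hij : i ≠ j) (heq : a i = a j) :
    IsPF n (Function.update a j (a j + 1)) ∧ a j + 1 < n := by
  have hbump : IsPF n (Function.update a j (a j + 1)) :=
    h.update_add_one (h.add_two_le_card_of_ne hij heq)
  exact ⟨hbump, by simpa using hbump.lt_s13 j⟩

/-- If `a` is a parking function with `a_1 = a_2`, then increasing the second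
entry by one again yields a parking function (and in particular `a_2 + 1 ≤ n - 1`). -/
theorem parking_function_bump_second (n : ℕ) (hn : 2 ≤ n) (a : Fin n → ℕ)
    (h : IsPF n a) (heq : a ⟨0, by omega⟩ = a ⟨1, by omega⟩) :
    IsPF n (Function.update a ⟨1, by omega⟩ (a ⟨1, by omega⟩ + 1)) ∧
      a ⟨1, by omega⟩ + 1 ≤ n - 1 :=
  (parking_function_bump_second_general h (by simp) heq).imp_right Nat.le_sub_one_of_lt
end

section
/- For n ≥ 2, twice the number of parking functions a of length n with a_1 > a_2 equals n·(n+1)^{n−2}; equivalently, the number of parking functions with a_1 > a_2 (which equals the number with a_1 < a_2) is (1/2)((n+1)^{n−1} − (n+1)^{n−2}). -/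
/-!
Pollak's circle argument.  Let the `n` cars choose spots on a circle with `n + 1` spots.  Relative
to the average density `n / (n + 1)`, the surplus of cars before a spot is a well-defined function
on the circle, and rotating the choices so that they start at `c` gives a parking function iff this
surplus is minimal at `c`.  The surplus, scaled by `n + 1`, is congruent to the position modulo
`n + 1`, so its minimum is attained exactly once.  Hence parking functions make up the proportion
`1 / (n + 1)` of every rotation-invariant set of choices, in particular of those in which two given
cars make different choices; exchanging these two cars shows that each order of the two choices is
equally frequent.
-/

section Counting

variable {α β ι : Type*}

lemma existsUnique_forall_le_of_injective [Finite α] [Nonempty α] [LinearOrder β] {g : α → β}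
    (hg : g.Injective) : ∃! a, ∀ b, g a ≤ g b := by
  obtain ⟨a, ha⟩ := Finite.exists_min g
  exact ⟨a, ha, fun b hb => hg ((hb a).antisymm (ha b))⟩

lemma ncard_fun_apply_ne [Fintype ι] [Fintype α] {i j : ι} (hij : i ≠ j) :
    {f : ι → α | f i ≠ f j}.ncard =
      (Fintype.card α - 1) * Fintype.card α ^ (Fintype.card ι - 1) := by
  classical
  let e : {f : ι → α // f i ≠ f j} ≃ (g : {k // k ≠ i} → α) × {x // x ≠ g ⟨j, hij.symm⟩} :=
    (((Equiv.funSplitAt i α).trans (Equiv.prodComm _ _)).subtypeEquiv fun _ => Iff.rfl).trans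
      (Equiv.subtypeProdEquivSigmaSubtype fun (g : {k // k ≠ i} → α) x => x ≠ g ⟨j, hij.symm⟩)
  calc {f : ι → α | f i ≠ f j}.ncard
      = ∑ g : {k // k ≠ i} → α, Fintype.card {x // x ≠ g ⟨j, hij.symm⟩} := by
        rw [← Nat.card_coe_set_eq, ← Fintype.card_sigma, ← Nat.card_eq_fintype_card]
        exact Nat.card_congr e
    _ = (Fintype.card α - 1) * Fintype.card α ^ (Fintype.card ι - 1) := by
        simp [Fintype.card_subtype_compl, mul_comm]

end Counting

section Circle

variable {n : ℕ}

/-- The surplus of cars over the average density `n / (n + 1)` in the spots before `c`, when car `i`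
chooses spot `f i` on a circle with `n + 1` spots.  It is scaled by `n + 1` to be an integer. -/
def carSurplus (f : Fin n → Fin (n + 1)) (c : Fin (n + 1)) : ℤ :=
  (n + 1) * (Finset.univ.filter fun i => f i < c).card - n * (c : ℕ)

lemma carSurplus_injective (f : Fin n → Fin (n + 1)) : (carSurplus f).Injective := by
  have carSurplus_modEq (c : Fin (n + 1)) : carSurplus f c ≡ (c : ℕ) [ZMOD (n + 1 : ℕ)] := by
    refine Int.modEq_iff_dvd.2 ⟨(c : ℕ) - (Finset.univ.filter fun i => f i < c).card, ?_⟩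
    simp only [carSurplus]
    push_cast
    ring
  intro c d hcd
  have hmod : (c : ℕ) ≡ (d : ℕ) [MOD n + 1] := Int.natCast_modEq_iff.1 <|
    (carSurplus_modEq c).symm.trans <| hcd ▸ carSurplus_modEq d
  exact Fin.ext (hmod.eq_of_lt_of_lt c.isLt d.isLt)

-- If `d < c`, the arc from `c` to `d` passes the origin, and the last summand is the full turn.
lemma ite_sub_lt_sub (x c d : Fin (n + 1)) :
    (if x - c < d - c then 1 else 0 : ℤ) =
      (if x < d then 1 else 0) - (if x < c then 1 else 0) + if d < c then 1 else 0 := by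
  have hx := Fin.intCast_val_sub_eq_sub_add_ite x c
  have hd := Fin.intCast_val_sub_eq_sub_add_ite d c
  simp only [Fin.lt_def, Fin.le_def] at *
  split_ifs at * <;> omega

lemma carSurplus_sub_carSurplus (f : Fin n → Fin (n + 1)) (c d : Fin (n + 1)) :
    carSurplus f d - carSurplus f c =
      (n + 1) * (Finset.univ.filter fun i => f i - c < d - c).card -
        n * ((d - c : Fin (n + 1)) : ℕ) := by
  have hcard : ((Finset.univ.filter fun i => f i - c < d - c).card : ℤ) =
      (Finset.univ.filter fun i => f i < d).card - (Finset.univ.filter fun i => f i < c).card +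
        n * if d < c then 1 else 0 := by
    simp only [Finset.card_filter, Nat.cast_sum, Nat.cast_ite, Nat.cast_one, Nat.cast_zero,
      ite_sub_lt_sub, Finset.sum_add_distrib, Finset.sum_sub_distrib, Finset.sum_const,
      Finset.card_univ, Fintype.card_fin, nsmul_eq_mul]
  rw [hcard, Fin.intCast_val_sub_eq_sub_add_ite, carSurplus, carSurplus]
  simp only [← not_lt, ite_not]
  split_ifs <;> push_cast <;> ring

lemma isPF_sub_iff (f : Fin n → Fin (n + 1)) (c : Fin (n + 1)) :
    IsPF n (fun i => (f i - c : Fin (n + 1))) ↔ ∀ d, carSurplus f c ≤ carSurplus f d := by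
  -- As `k ≤ n`, the smallest integer at or above `n * k / (n + 1)` is `k` itself.
  have le_iff {k m : ℕ} (hk : k ≤ n) : k ≤ m ↔ 0 ≤ (n + 1 : ℤ) * m - n * k := by
    constructor <;> intro h
    · nlinarith
    · by_contra! hmk
      nlinarith
  calc IsPF n (fun i => (f i - c : Fin (n + 1)))
      ↔ ∀ k : Fin (n + 1), (k : ℕ) ≤ (Finset.univ.filter fun i => f i - c < k).card := by
        simp only [IsPF, Fin.forall_iff, Nat.lt_succ_iff, Fin.lt_def]
    _ ↔ ∀ d : Fin (n + 1),
          ((d - c : Fin (n + 1)) : ℕ) ≤ (Finset.univ.filter fun i => f i - c < d - c).card :=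
        (Equiv.subRight c).surjective.forall
    _ ↔ ∀ d, carSurplus f c ≤ carSurplus f d := forall_congr' fun d => by
        rw [le_iff (d - c).is_le, ← carSurplus_sub_carSurplus, sub_nonneg]

lemma existsUnique_isPF_sub (f : Fin n → Fin (n + 1)) :
    ∃! c, IsPF n (fun i => (f i - c : Fin (n + 1))) := by
  simp only [isPF_sub_iff]
  exact existsUnique_forall_le_of_injective (carSurplus_injective f)

theorem ncard_isPF_inter_mul {S : Set (Fin n → Fin (n + 1))}
    (hS : ∀ f ∈ S, ∀ c, (fun i => f i + c) ∈ S) :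
    {f ∈ S | IsPF n fun i => f i}.ncard * (n + 1) = S.ncard := by
  have hbij : Set.BijOn (fun p : (Fin n → Fin (n + 1)) × Fin (n + 1) => fun i => p.1 i + p.2)
      ({f ∈ S | IsPF n fun i => f i} ×ˢ Set.univ) S := by
    refine ⟨fun p hp => hS _ hp.1.1 _, ?_, fun f hf => ?_⟩
    · rintro ⟨f, c⟩ ⟨⟨-, hf⟩, -⟩ ⟨g, d⟩ ⟨⟨-, hg⟩, -⟩ hfg
      have hfg' (i : Fin n) : f i + c = g i + d := congrFun hfg i
      obtain rfl : c = d := (existsUnique_isPF_sub fun i => f i + c).unique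
        (by simpa only [add_sub_cancel_right] using hf)
        (by simpa only [hfg', add_sub_cancel_right] using hg)
      exact Prod.ext (funext fun i => add_right_cancel (hfg' i)) rfl
    · obtain ⟨c, hc, -⟩ := existsUnique_isPF_sub f
      refine ⟨(fun i => f i - c, c), ⟨⟨?_, hc⟩, trivial⟩, funext fun i => sub_add_cancel _ _⟩
      simpa only [sub_eq_add_neg] using hS f hf (-c)
  rw [← hbij.ncard_eq, Set.ncard_prod, Set.ncard_univ, Nat.card_fin]

end Circle

namespace IsPF

variable {n : ℕ} {a : Fin n → ℕ}

lemma apply_lt (ha : IsPF n a) (i : Fin n) : a i < n := by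
  have hcard : (Finset.univ.filter fun i => a i < n).card = (Finset.univ : Finset (Fin n)).card :=
    (Finset.card_filter_le _ _).antisymm ((Finset.card_fin n).trans_le (ha n le_rfl))
  exact Finset.filter_card_eq hcard i (Finset.mem_univ i)

lemma comp_perm_iff (σ : Equiv.Perm (Fin n)) : IsPF n (a ∘ σ) ↔ IsPF n a := by
  have hcard (k : ℕ) : (Finset.univ.filter fun i => (a ∘ σ) i < k).card =
      (Finset.univ.filter fun i => a i < k).card :=
    Finset.card_equiv σ fun i => by simp
  simp only [IsPF, hcard]

end IsPF

lemma finite_setOf_isPF (n : ℕ) : {a : Fin n → ℕ | IsPF n a}.Finite :=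
  (Set.Finite.pi' fun _ => Set.finite_Iio n).subset fun _ ha => ha.apply_lt

section TwoCars

variable {n : ℕ}

theorem ncard_isPF_ne {i j : Fin n} (hij : i ≠ j) :
    {a : Fin n → ℕ | IsPF n a ∧ a i ≠ a j}.ncard = n * (n + 1) ^ (n - 2) := by
  let S : Set (Fin n → Fin (n + 1)) := {f | f i ≠ f j}
  have hS : ∀ f ∈ S, ∀ c, (fun k => f k + c) ∈ S := fun _ hf c => (add_left_injective c).ne hf
  have himage : {a : Fin n → ℕ | IsPF n a ∧ a i ≠ a j} =
      (Fin.val ∘ ·) '' {f ∈ S | IsPF n fun k => f k} := by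
    ext a
    constructor
    · rintro ⟨ha, hne⟩
      refine ⟨fun k => ⟨a k, (ha.apply_lt k).trans n.lt_succ_self⟩, ⟨?_, ha⟩, rfl⟩
      exact fun h => hne (congrArg Fin.val h)
    · rintro ⟨f, ⟨hne, hf⟩, rfl⟩
      exact ⟨hf, Fin.val_injective.ne hne⟩
  have hsucc : n - 1 = n - 2 + 1 := by omega
  apply Nat.eq_of_mul_eq_mul_right n.succ_pos
  rw [himage, Set.ncard_image_of_injective _ Fin.val_injective.comp_left,
    ncard_isPF_inter_mul hS, ncard_fun_apply_ne hij]
  simp only [Fintype.card_fin, Nat.add_sub_cancel, hsucc, pow_succ, mul_assoc]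

theorem ncard_isPF_lt_comm (i j : Fin n) :
    {a : Fin n → ℕ | IsPF n a ∧ a j < a i}.ncard =
      {a : Fin n → ℕ | IsPF n a ∧ a i < a j}.ncard :=
  Set.ncard_congr' <| ((Equiv.swap i j).arrowCongr (Equiv.refl ℕ)).subtypeEquiv fun a =>
    and_congr (IsPF.comp_perm_iff (Equiv.swap i j)).symm (by simp)

theorem ncard_isPF_ne_eq_two_mul (i j : Fin n) :
    {a : Fin n → ℕ | IsPF n a ∧ a i ≠ a j}.ncard =
      2 * {a : Fin n → ℕ | IsPF n a ∧ a j < a i}.ncard := by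
  have hunion : {a : Fin n → ℕ | IsPF n a ∧ a i ≠ a j} =
      {a | IsPF n a ∧ a j < a i} ∪ {a | IsPF n a ∧ a i < a j} := by
    ext a
    simp only [ne_iff_lt_or_gt, and_or_left, Set.mem_union, Set.mem_ofPred_eq, or_comm]
  have hdisj : Disjoint {a : Fin n → ℕ | IsPF n a ∧ a j < a i} {a | IsPF n a ∧ a i < a j} :=
    Set.disjoint_left.2 fun _ h h' => h.2.asymm h'.2
  rw [hunion, Set.ncard_union_eq hdisj ((finite_setOf_isPF n).subset fun _ h => h.1)
    ((finite_setOf_isPF n).subset fun _ h => h.1), ← ncard_isPF_lt_comm, two_mul]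

end TwoCars

theorem gt_parking_count_formula_general {n : ℕ} {i j : Fin n} (hij : i ≠ j) :
    2 * {a : Fin n → ℕ | IsPF n a ∧ a j < a i}.ncard = n * (n + 1) ^ (n - 2) ∧
      {a : Fin n → ℕ | IsPF n a ∧ a j < a i}.ncard =
        {a : Fin n → ℕ | IsPF n a ∧ a i < a j}.ncard ∧
      {a : Fin n → ℕ | IsPF n a ∧ a j < a i}.ncard =
        ((n + 1) ^ (n - 1) - (n + 1) ^ (n - 2)) / 2 := by
  have hcount : 2 * {a : Fin n → ℕ | IsPF n a ∧ a j < a i}.ncard = n * (n + 1) ^ (n - 2) := by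
    rw [← ncard_isPF_ne_eq_two_mul, ncard_isPF_ne hij]
  have hpow : (n + 1) ^ (n - 1) - (n + 1) ^ (n - 2) = n * (n + 1) ^ (n - 2) := by
    rw [show n - 1 = n - 2 + 1 by omega, pow_succ', ← Nat.sub_one_mul, Nat.add_sub_cancel]
  refine ⟨hcount, ncard_isPF_lt_comm i j, ?_⟩
  rw [hpow, ← hcount, Nat.mul_div_cancel_left _ two_pos]

/-- Twice the number of parking functions of length `n` with `a_1 > a_2` equals
`n * (n+1)^(n-2)`; equivalently, this number (which equals the number with
`a_1 < a_2`) is `((n+1)^(n-1) - (n+1)^(n-2)) / 2`. -/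
theorem gt_parking_count_formula (n : ℕ) (hn : 2 ≤ n) :
    2 * Set.ncard {a : Fin n → ℕ | IsPF n a ∧ a ⟨1, by omega⟩ < a ⟨0, by omega⟩} =
        n * (n + 1) ^ (n - 2) ∧
      Set.ncard {a : Fin n → ℕ | IsPF n a ∧ a ⟨1, by omega⟩ < a ⟨0, by omega⟩} =
        Set.ncard {a : Fin n → ℕ | IsPF n a ∧ a ⟨0, by omega⟩ < a ⟨1, by omega⟩} ∧
      Set.ncard {a : Fin n → ℕ | IsPF n a ∧ a ⟨1, by omega⟩ < a ⟨0, by omega⟩} =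
        ((n + 1) ^ (n - 1) - (n + 1) ^ (n - 2)) / 2 := by
  exact gt_parking_count_formula_general (by simp)
end
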